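/- Tableau Lifting Theorem, odd case: Let D ≥ 3 be odd and m ≥ 2, and assume the binomial coefficient C(2(D−1), D−1) is at least 2(m−1). Let d ≥ 1, let ρ = (ρ_1 ≥ … ≥ ρ_m ≥ 0) be a partition of d with at most m parts, and let λ be a partition of d·D with at most m rows. Let S be a regular tableau of shape λ with entries in {1,…,m} and content D·ρ (entry i occurs exactly D·ρ_i times). Set e_ρ := Σ_{i=1}^{m} 2·⌈ρ_i/(2(D−2))⌉ and δ := m·e_ρ + d. Then there exists a tableau T of shape λ + (m × (e_ρ·D)) with entries in {1,…,δ} in which every entry of {1,…,δ} appears exactly D times, such that: (1) for every map φ : {1,…,δ} → {1,…,m} for which φ(T) is regular, rightpart(φ(T)) lies in the S_m-orbit of S; (2) for every map φ : {1,…,δ} → {1,…,m} for which φ(T) is regular, leftpart(φ(T)) is duplex; (3) there exists a map φ : {1,…,δ} → {1,…,m} such that φ(T) is regular and rightpart(φ(T)) = S. -/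

import Mathlib

open scoped BigOperators

/-- The `c`-th column of a tableau of shape `lam` (row lengths `lam r`),
read from top to bottom. -/
def tabCol {m : ℕ} {A : Type*} (lam : Fin m → ℕ) (T : (r : Fin m) → Fin (lam r) → A)
    (c : ℕ) : List A :=
  (List.finRange m).filterMap (fun r => if h : c < lam r then some (T r ⟨c, h⟩) else none)

/-- A tableau is regular if no column has a repeated entry. -/
def TabRegular {m : ℕ} {A : Type*} (lam : Fin m → ℕ)
    (T : (r : Fin m) → Fin (lam r) → A) : Prop :=
  ∀ c : ℕ, (tabCol lam T c).Nodup

/-- The number of columns of the shape `lam`. -/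
def tabWidth {m : ℕ} (lam : Fin m → ℕ) : ℕ := Finset.univ.sup lam

/-- A tableau is duplex if every column (as an ordered sequence of entries)
occurs an even number of times among its columns. -/
def TabDuplex {m : ℕ} {A : Type*} [DecidableEq A] (lam : Fin m → ℕ)
    (T : (r : Fin m) → Fin (lam r) → A) : Prop :=
  ∀ c < tabWidth lam,
    Even (((Finset.range (tabWidth lam)).filter
      (fun c' => tabCol lam T c' = tabCol lam T c)).card)

/-- The number of occurrences of the entry `a` in the tableau `T`. -/
def tabCount {m : ℕ} {A : Type*} [DecidableEq A] (lam : Fin m → ℕ)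
    (T : (r : Fin m) → Fin (lam r) → A) (a : A) : ℕ :=
  ∑ r : Fin m, ((Finset.univ : Finset (Fin (lam r))).filter (fun c => T r c = a)).card

/-- The leftmost `e` columns of a tableau of shape `(m × e) + lam`. -/
def tabLeft {m : ℕ} {A : Type*} (lam : Fin m → ℕ) (e : ℕ)
    (T : (r : Fin m) → Fin (e + lam r) → A) : (r : Fin m) → Fin e → A :=
  fun r c => T r (Fin.castLE (Nat.le_add_right e (lam r)) c)

/-- The shape-`lam` subtableau of a tableau of shape `(m × e) + lam` formed by the
columns after the leftmost `e` columns. -/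
def tabRight {m : ℕ} {A : Type*} (lam : Fin m → ℕ) (e : ℕ)
    (T : (r : Fin m) → Fin (e + lam r) → A) : (r : Fin m) → Fin (lam r) → A :=
  fun r c => T r ⟨e + c.1, Nat.add_lt_add_left c.isLt e⟩

/-!
The rectangle is cut into blocks of `2 * D` columns, and each block has a kind `i`, a letter of `S`.
In a block of kind `i`, row `r ≠ i` carries two private letters, distributed by a `D`-subset of the
columns, while row `i` carries letters that also replace the letter `i` of `S`. Two of the columns
agree in row `i` and carry different letters in every other row; since the `D`-subsets form an
antichain, regularity forces the two private letters of each row to have the same colour, so all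
columns of a block are coloured alike.

The blocks of kind `r` and one root block are then linked by shifting row `r` of a single column
cyclically along them. A column with one shifted entry has to be coloured like the original column,
as two permutations cannot differ at exactly one place, so row `r` has the same colour `σ r` in all
these blocks. Hence all letters replacing `i` have the colour `σ i`, and the columns come in groups
of `2 * D` that are coloured alike.

The antichain arises from the `(D - 2)`-subsets of a set of size `2 * D - 3`, and
`(2 * D - 3).choose (D - 2)` is half of the central binomial coefficient of the theorem.
-/

section Lifting

open Finset Function

/-- Every value of `f` is taken exactly `D` times; for a tableau this says that every letter of
the alphabet occurs `D` times. -/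
def UniformFibers {α β : Type*} [Fintype α] [DecidableEq β] (D : ℕ) (f : α → β) : Prop :=
  ∀ b, #{a | f a = b} = D

namespace UniformFibers

variable {α α' β β' : Type*} [Fintype α] [Fintype α'] [DecidableEq β] [DecidableEq β'] {D : ℕ}

theorem comp_equiv {f : α → β} (hf : UniformFibers D f) (e : α' ≃ α) : UniformFibers D (f ∘ e) :=
  fun b ↦ (card_equiv e (by simp)).trans (hf b)

theorem equiv_comp {f : α → β} (hf : UniformFibers D f) (e : β ≃ β') : UniformFibers D (e ∘ f) := by
  intro b
  simpa only [comp_apply, ← e.eq_symm_apply] using hf (e.symm b)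

theorem sigmaMap {ι : Type*} [Fintype ι] [DecidableEq ι] {α β : ι → Type*} [∀ i, Fintype (α i)]
    [∀ i, DecidableEq (β i)] {f : ∀ i, α i → β i} (hf : ∀ i, UniformFibers D (f i)) :
    UniformFibers D (Sigma.map id f) := by
  rintro ⟨i, b⟩
  rw [card_filter, Fintype.sum_sigma, Fintype.sum_eq_single i, ← hf i b, card_filter]
  · exact sum_congr rfl fun a _ ↦ if_congr (by simp [Sigma.map]) rfl rfl
  · intro j hj
    simp [Sigma.map, hj]

theorem card_eq_card_mul [Fintype β] {f : α → β} (hf : UniformFibers D f) :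
    Fintype.card α = Fintype.card β * D := by
  rw [← card_univ, card_eq_sum_card_fiberwise (f := f) (t := univ) (by simp), sum_congr rfl
    fun b _ ↦ hf b, sum_const, card_univ, smul_eq_mul]

end UniformFibers

theorem exists_equiv_apply_eq {γ α β : Type*} [Fintype α] [Fintype β]
    (hcard : Fintype.card α = Fintype.card β) (e : γ ↪ α) (j : γ ↪ β) :
    ∃ g : α ≃ β, ∀ x, g (e x) = j x := by
  classical
  let g₀ : α ≃ β := Fintype.equivOfCardEq hcard
  let h : Set.range (g₀ ∘ e) ≃ Set.range j :=
    (Equiv.ofInjective _ (g₀.injective.comp e.injective)).symm.trans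
      (Equiv.ofInjective _ j.injective)
  refine ⟨g₀.trans h.extendSubtype, fun x ↦ ?_⟩
  change h.extendSubtype ((g₀ ∘ e) x) = j x
  rw [h.extendSubtype_apply_of_mem _ ⟨x, rfl⟩]
  have hx : (Equiv.ofInjective _ (g₀.injective.comp e.injective)).symm ⟨g₀ (e x), x, rfl⟩ = x :=
    Equiv.ofInjective_symm_apply (g₀.injective.comp e.injective) x
  exact congrArg j hx

theorem exists_uniformFibers_extension {γ α β : Type*} [Fintype γ] [Fintype α] [Fintype β]
    [DecidableEq β] {D : ℕ} (hcard : Fintype.card α = Fintype.card β * D) (e : γ ↪ α) (f : γ → β)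
    (hf : ∀ b, #{x | f x = b} ≤ D) : ∃ g : α → β, UniformFibers D g ∧ ∀ x, g (e x) = f x := by
  have hslot (b : β) : Nonempty ({x // f x = b} ↪ Fin D) :=
    Embedding.nonempty_of_card_le (by simpa [Fintype.card_subtype] using hf b)
  let slot (b : β) : {x // f x = b} ↪ Fin D := (hslot b).some
  let j : γ ↪ Σ _ : β, Fin D :=
    (Equiv.sigmaFiberEquiv f).symm.toEmbedding.trans (Embedding.sigmaMap (.refl β) slot)
  obtain ⟨g, hg⟩ := exists_equiv_apply_eq (by simpa using hcard) e j
  have hfst : UniformFibers D (Sigma.fst : (Σ _ : β, Fin D) → β) := fun b ↦ by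
    rw [card_filter, Fintype.sum_sigma, Fintype.sum_eq_single b] <;> simp +contextual
  exact ⟨Sigma.fst ∘ g, hfst.comp_equiv g, fun x ↦ congrArg Sigma.fst (hg x)⟩

theorem eq_of_injective_of_forall_ne {ι : Type*} [Finite ι] {u v : ι → ι}
    (hu : Injective u) (hv : Injective v) {i : ι} (h : ∀ j ≠ i, u j = v j) : u = v := by
  funext j
  rcases eq_or_ne j i with rfl | hj
  · obtain ⟨l, hl⟩ := (Finite.surjective_of_injective hv) (u j)
    rcases eq_or_ne l j with rfl | hlj
    · exact hl.symm
    · exact absurd (hu ((h l hlj).trans hl)) hlj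
  · exact h j hj

theorem columns_eq_of_antichain {ι B : Type*} [Finite ι] {i : ι} {H : ι → Finset B}
    (hH : ∀ j ≠ i, ∀ j' ≠ i, H j ⊆ H j' → j = j') {M : ι → B → ι}
    (hM : ∀ j ≠ i, ∀ c c', (c ∈ H j ↔ c' ∈ H j) → M j c = M j c')
    (hinj : ∀ c, Injective fun j ↦ M j c) {p q : B} (hp : ∀ j ≠ i, p ∈ H j)
    (hq : ∀ j ≠ i, q ∉ H j) (hpq : M i p = M i q) (c : B) (j : ι) : M j c = M j p := by
  have hqp : ∀ j ≠ i, M j q = M j p := by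
    intro j hj
    obtain ⟨l, hl : M l p = M j q⟩ := Finite.surjective_of_injective (hinj p) (M j q)
    have hli : l ≠ i := by
      rintro rfl
      exact hj (hinj q (hpq.symm.trans hl)).symm
    suffices l = j by rw [← hl, this]
    by_contra hlj
    refine hlj (hH l hli j hj fun c hcl ↦ by_contra fun hcj ↦ hlj (hinj c ?_))
    calc M l c = M l p := hM l hli c p (by simp [hcl, hp l hli])
      _ = M j q := hl
      _ = M j c := hM j hj q c (by simp [hcj, hq j hj])
  have hoff : ∀ j ≠ i, M j c = M j p := by
    intro j hj
    by_cases hc : c ∈ H j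
    · exact hM j hj c p (by simp [hc, hp j hj])
    · exact (hM j hj c q (by simp [hc, hq j hj])).trans (hqp j hj)
  exact congrFun (eq_of_injective_of_forall_ne (hinj c) (hinj p) hoff) j

theorem apply_eq_of_isCycleOn {K X : Type*} {f : Equiv.Perm K} {s : Finset K}
    (hf : f.IsCycleOn s) {k₀ : K} (hk₀ : k₀ ∈ s) {g : K → X}
    (hg : ∀ k ∈ s, k ≠ k₀ → g (f k) = g k) {k : K} (hk : k ∈ s) : g k = g k₀ := by
  obtain ⟨n, -, hn⟩ := hf.exists_pow_eq hk hk₀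
  induction n generalizing k with
  | zero => exact congrArg g hn
  | succ n ih =>
    rcases eq_or_ne k k₀ with rfl | hne
    · rfl
    · rw [← hg k hk hne]
      exact ih (hf.1.mapsTo hk) (by rwa [pow_succ, Equiv.Perm.mul_apply] at hn)

section Patterns

variable {ι K R : Type*}

/-- The `2 * D` columns of a block. In the three special columns `Sum.inr 0`, `Sum.inr 1`,
`Sum.inr 2` the block repeats one of its letters; the column `Sum.inr 2` is later used to link the
block to other blocks. -/
abbrev BlockCol (D : ℕ) : Type := Fin (2 * D - 3) ⊕ Fin 3

theorem card_blockCol {D : ℕ} (hD : 2 ≤ D) : Fintype.card (BlockCol D) = 2 * D := by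
  simp only [Fintype.card_sum, Fintype.card_fin]
  omega

/-- Column halves for blocks of each kind `i`: in row `r ≠ i` a block of kind `i` carries one letter
in the columns `half i r` and another letter in the remaining columns. The values `half i i` are
irrelevant. -/
structure HalfFamily (ι : Type*) (D : ℕ) where
  half : ι → ι → Finset (BlockCol D)
  card_half : ∀ {i r}, r ≠ i → #(half i r) = D
  inr_mem_half : ∀ {i r}, r ≠ i → ∀ s, Sum.inr s ∈ half i r ↔ s ≠ 1
  eq_of_half_subset : ∀ {i r r'}, r ≠ i → r' ≠ i → half i r ⊆ half i r' → r = r'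

theorem nonempty_halfFamily [Fintype ι] {D : ℕ} (hD : 2 ≤ D)
    (hι : Fintype.card ι - 1 ≤ (2 * D - 3).choose (D - 2)) : Nonempty (HalfFamily ι D) := by
  classical
  have hsets (i : ι) : ∃ A : ι → Finset (Fin (2 * D - 3)),
      (∀ r ≠ i, #(A r) = D - 2) ∧ ∀ r ≠ i, ∀ r' ≠ i, A r = A r' → r = r' := by
    obtain ⟨g⟩ : Nonempty ({r // r ≠ i} ↪ {s : Finset (Fin (2 * D - 3)) // #s = D - 2}) :=
      Embedding.nonempty_of_card_le (by simpa [Fintype.card_subtype_compl] using hι)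
    refine ⟨fun r ↦ if hr : r ≠ i then g ⟨r, hr⟩ else ∅, fun r hr ↦ ?_, fun r hr r' hr' h ↦ ?_⟩
    · simpa only [dif_pos hr] using (g ⟨r, hr⟩).2
    · simp only [dif_pos hr, dif_pos hr'] at h
      exact congrArg Subtype.val (g.injective (Subtype.ext h))
  choose A hcard hinj using hsets
  refine ⟨⟨fun i r ↦ (A i r).disjSum {0, 2}, fun {i r} hr ↦ ?_, fun _ s ↦ ?_,
    fun {i r r'} hr hr' hsub ↦ hinj i r hr r' hr' ?_⟩⟩
  · rw [card_disjSum, hcard i r hr, card_pair (by decide)]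
    omega
  · rw [inr_mem_disjSum]
    fin_cases s <;> simp
  · refine eq_of_subset_of_card_le (fun c hc ↦ ?_) (by rw [hcard i r hr, hcard i r' hr'])
    exact inl_mem_disjSum.1 (hsub (inl_mem_disjSum.2 hc))

/-- The entries of row `i` in the blocks of kind `i`, together with those of the target tableau,
whose cells `R` are labelled by `t`. Every letter has a label, and letters are used in blocks
and cells of their own label only. -/
structure BlockFilling [Fintype K] [Fintype R] (kind : K → ι) (t : R → ι) (D : ℕ)
    (X : Type*) [DecidableEq X] where
  fill : (K × BlockCol D) ⊕ R → X
  label : X → ι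
  uniform : UniformFibers D fill
  label_inl : ∀ p, label (fill (Sum.inl p)) = kind p.1
  label_inr : ∀ b, label (fill (Sum.inr b)) = t b
  fill_special : ∀ k s, fill (Sum.inl (k, Sum.inr s)) = fill (Sum.inl (k, Sum.inr 0))
  exists_fill_inl : ∀ x, ∃ p, fill (Sum.inl p) = x

/- One letter per block fills its special columns, and each of the remaining `card K + n` letters
takes at least one of the `(2 * D - 3) * card K` ordinary cells; this is the bound on `n`. -/
theorem exists_fill_of_single_kind [Fintype K] [Fintype R] [DecidableEq K] {D n : ℕ} (hD : 3 ≤ D)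
    (hR : Fintype.card R = D * n) (hn : n ≤ 2 * (D - 2) * Fintype.card K) :
    ∃ F : (K × BlockCol D) ⊕ R → K ⊕ Fin (Fintype.card K + n), UniformFibers D F ∧
      (∀ k s, F (Sum.inl (k, Sum.inr s)) = Sum.inl k) ∧ ∀ x, ∃ p, F (Sum.inl p) = x := by
  obtain ⟨a⟩ : Nonempty (Fin (Fintype.card K + n) ↪ K × Fin (2 * D - 3)) := by
    refine Embedding.nonempty_of_card_le ?_
    obtain ⟨e, rfl⟩ := Nat.exists_eq_add_of_le' (show 2 ≤ D by omega)
    simp only [Fintype.card_fin, Fintype.card_prod, show 2 * (e + 2) - 3 = 2 * e + 1 by omega]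
    rw [Nat.add_sub_cancel] at hn
    linarith
  let e : (K × Fin 3) ⊕ Fin (Fintype.card K + n) ↪ (K × BlockCol D) ⊕ R :=
    ⟨Sum.elim (fun p ↦ Sum.inl (p.1, Sum.inr p.2)) fun w ↦ Sum.inl ((a w).1, Sum.inl (a w).2),
      Injective.sumElim (fun p p' h ↦ by simpa [Prod.ext_iff] using h)
        (fun w w' h ↦ a.injective (Prod.ext_iff.2 (by simpa using h))) (by simp)⟩
  let f : (K × Fin 3) ⊕ Fin (Fintype.card K + n) → K ⊕ Fin (Fintype.card K + n) :=
    Sum.map Prod.fst id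
  have hf : ∀ x, #{y | f y = x} ≤ D := by
    simp only [f]
    rintro (k | w) <;> rw [card_filter, Fintype.sum_sum_type]
    · simpa [Fintype.sum_prod_type_right, -sum_boole] using hD
    · simpa using by omega
  have hcard : Fintype.card ((K × BlockCol D) ⊕ R) =
      Fintype.card (K ⊕ Fin (Fintype.card K + n)) * D := by
    simp only [Fintype.card_sum, Fintype.card_prod, card_blockCol (show 2 ≤ D by omega), hR,
      Fintype.card_fin]
    ring
  obtain ⟨F, hF, hFe⟩ := exists_uniformFibers_extension hcard e f hf
  refine ⟨F, hF, fun k s ↦ hFe (Sum.inl (k, s)), ?_⟩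
  rintro (k | w)
  · exact ⟨_, hFe (Sum.inl (k, 0))⟩
  · exact ⟨_, hFe (Sum.inr w)⟩

theorem nonempty_blockFilling [Fintype R] [Fintype ι] [DecidableEq ι] {κ : ι → Type*}
    [∀ i, Fintype (κ i)] [∀ i, DecidableEq (κ i)] {t : R → ι} {D : ℕ} (hD : 3 ≤ D) {ρ : ι → ℕ}
    (ht : ∀ i, #{b | t b = i} = D * ρ i)
    (hρ : ∀ i, ρ i ≤ 2 * (D - 2) * Fintype.card (κ i)) :
    Nonempty (BlockFilling (Sigma.fst : (Σ i, κ i) → ι) t D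
      (Σ i, κ i ⊕ Fin (Fintype.card (κ i) + ρ i))) := by
  have hF (i : ι) := exists_fill_of_single_kind (R := {b // t b = i}) hD
    ((Fintype.card_subtype _).trans (ht i)) (hρ i)
  choose F hFD hFs hFx using hF
  let e : ((Σ i, κ i) × BlockCol D) ⊕ R ≃ Σ i, (κ i × BlockCol D) ⊕ {b // t b = i} :=
    ((Equiv.sigmaProdDistrib κ _).sumCongr (Equiv.sigmaFiberEquiv t).symm).trans
      (Equiv.sigmaSumDistrib _ _).symm
  refine ⟨⟨Sigma.map id F ∘ e, Sigma.fst, (UniformFibers.sigmaMap hFD).comp_equiv e, fun _ ↦ rfl,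
    fun _ ↦ rfl, fun k s ↦ ?_, fun ⟨i, x⟩ ↦ ?_⟩⟩
  · exact congrArg (Sigma.mk k.1) ((hFs k.1 k.2 s).trans (hFs k.1 k.2 0).symm)
  · obtain ⟨p, hp⟩ := hFx i x
    exact ⟨(⟨i, p.1⟩, p.2), congrArg (Sigma.mk i) hp⟩

/-- For every kind `i`, a cyclic permutation of the blocks of kind `i` and the common block
`root`. -/
structure BlockLinks (kind : K → ι) where
  root : K
  link : ι → Equiv.Perm K
  isCycleOn : ∀ i, (link i).IsCycleOn {k | k = root ∨ kind k = i}
  link_apply : ∀ {i k}, k ≠ root → kind k ≠ i → link i k = k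

theorem nonempty_blockLinks [Finite K] [Nonempty K] (kind : K → ι) :
    Nonempty (BlockLinks kind) := by
  classical
  have := Fintype.ofFinite K
  let root := Classical.arbitrary K
  have hcycle (i : ι) := Finset.exists_cycleOn {k | k = root ∨ kind k = i}
  choose link hlink hsupp using hcycle
  refine ⟨⟨root, link, fun i ↦ by simpa using hlink i, fun {i k} hroot hkind ↦ ?_⟩⟩
  by_contra h
  simpa [hroot, hkind] using hsupp i (Equiv.Perm.mem_support.2 h)

end Patterns

section Forcing

variable {ι K R X : Type*} [DecidableEq ι] [Fintype K] [Fintype R] [DecidableEq X]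
  {kind : K → ι} {t : R → ι} {D : ℕ}

/-- The alphabet of the lifted tableau: two private letters for every row `r` and every block of
kind other than `r`, and the shared letters `X`. -/
abbrev Letter (kind : K → ι) (X : Type*) : Type _ := ({p : ι × K // p.1 ≠ kind p.2} × Bool) ⊕ X

/-- The entry in row `r` of a column of a block, before the blocks are linked. -/
def blockEntry (H : HalfFamily ι D) (F : BlockFilling kind t D X) (r : ι) (p : K × BlockCol D) :
    Letter kind X :=
  if hr : r = kind p.1 then Sum.inr (F.fill (Sum.inl p))
  else Sum.inl (⟨(r, p.1), hr⟩, decide (p.2 ∈ H.half (kind p.1) r))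

/-- The canonical colouring, which colours a private letter by its row and a shared letter by its
label. -/
def letterColor (F : BlockFilling kind t D X) : Letter kind X → ι :=
  Sum.elim (fun a ↦ a.1.1.1) F.label

/-- In row `r`, linking the blocks moves the entries of the columns `Sum.inr 2` along the
permutation `link r` of the blocks. -/
def BlockLinks.cellPerm (ℓ : BlockLinks kind) (D : ℕ) (r : ι) : Equiv.Perm (K × BlockCol D) :=
  Equiv.prodCongrLeft fun c ↦ if c = Sum.inr 2 then ℓ.link r else 1

variable {H : HalfFamily ι D} {F : BlockFilling kind t D X} {ℓ : BlockLinks kind}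

theorem blockEntry_kind (k : K) (c : BlockCol D) :
    blockEntry H F (kind k) (k, c) = Sum.inr (F.fill (Sum.inl (k, c))) :=
  dif_pos rfl

theorem letterColor_blockEntry (r : ι) (p : K × BlockCol D) :
    letterColor F (blockEntry H F r p) = r := by
  unfold blockEntry
  split_ifs with hr
  · exact (F.label_inl p).trans hr.symm
  · rfl

theorem blockEntry_inr {s : Fin 3} (hs : s ≠ 1) (r : ι) (k : K) :
    blockEntry H F r (k, Sum.inr s) = blockEntry H F r (k, Sum.inr 0) := by
  unfold blockEntry
  split_ifs with hr
  · rw [F.fill_special]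
  · simp [H.inr_mem_half hr, hs]

theorem blockEntry_eq_inl {r r' : ι} {k : K} {p : K × BlockCol D} {hr : r ≠ kind k} {b : Bool} :
    blockEntry H F r' p = Sum.inl (⟨(r, k), hr⟩, b) ↔
      r' = r ∧ p.1 = k ∧ decide (p.2 ∈ H.half (kind k) r) = b := by
  obtain ⟨k', c⟩ := p
  unfold blockEntry
  split_ifs with hr'
  · simp only [false_iff]
    rintro ⟨rfl, rfl, -⟩
    exact hr hr'
  · simp only [Sum.inl.injEq, Prod.mk.injEq, Subtype.mk.injEq, and_assoc]
    refine and_congr_right fun hrr ↦ and_congr_right fun hkk ↦ ?_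
    subst hrr hkk
    rfl

theorem blockEntry_eq_inr {r : ι} {p : K × BlockCol D} {x : X} :
    blockEntry H F r p = Sum.inr x ↔ r = kind p.1 ∧ F.fill (Sum.inl p) = x := by
  unfold blockEntry
  split_ifs with hr <;> simp [hr]

theorem uniformFibers_blockEntry [Fintype ι] [DecidableEq K] (hD : 2 ≤ D) :
    UniformFibers D (Sum.elim (fun p : ι × (K × BlockCol D) ↦ blockEntry H F p.1 p.2)
      fun b ↦ Sum.inr (F.fill (Sum.inr b))) := by
  rintro (⟨⟨⟨r, k⟩, hr : r ≠ kind k⟩, b⟩ | x)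
  · have hhalf : #{c | decide (c ∈ H.half (kind k) r) = b} = D := by
      cases b
      · simp only [decide_eq_false_iff_not, filter_not, filter_mem_eq_inter, univ_inter]
        rw [card_univ_sdiff, card_blockCol hD, H.card_half hr]
        omega
      · simp [H.card_half hr]
    refine Eq.trans ?_ hhalf
    simp [card_filter, Fintype.sum_sum_type, Fintype.sum_prod_type, blockEntry_eq_inl, ite_and,
      -sum_boole]
  · refine Eq.trans ?_ (F.uniform x)
    simp [card_filter, Fintype.sum_sum_type, Fintype.sum_prod_type_right, blockEntry_eq_inr,
      ite_and, -sum_boole]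

variable {φ : Letter kind X → ι}

theorem injective_blockEntry_of_linked
    (hφ : ∀ p, Injective fun r ↦ φ (blockEntry H F r (ℓ.cellPerm D r p))) (p : K × BlockCol D) :
    Injective fun r ↦ φ (blockEntry H F r p) := by
  obtain ⟨k, c⟩ := p
  by_cases hc : c = Sum.inr 2
  · subst hc
    simpa [BlockLinks.cellPerm, blockEntry_inr] using hφ (k, Sum.inr 0)
  · simpa [BlockLinks.cellPerm, hc] using hφ (k, c)

theorem apply_blockEntry_column_eq [Finite ι]
    (hφ : ∀ p, Injective fun r ↦ φ (blockEntry H F r p)) (r : ι) (k : K) (c : BlockCol D) :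
    φ (blockEntry H F r (k, c)) = φ (blockEntry H F r (k, Sum.inr 0)) := by
  refine columns_eq_of_antichain (i := kind k) (H := H.half (kind k)) (q := Sum.inr 1)
    (M := fun r c ↦ φ (blockEntry H F r (k, c))) (fun r hr r' hr' ↦ H.eq_of_half_subset hr hr')
    (fun r hr c c' h ↦ ?_) (fun c ↦ hφ (k, c)) (fun r hr ↦ ?_) (fun r hr ↦ ?_) ?_ c r
  · simp [blockEntry, hr, h]
  · simp [H.inr_mem_half hr]
  · simp [H.inr_mem_half hr]
  · simp only [blockEntry_kind, F.fill_special k 1]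

theorem apply_blockEntry_link_eq [Finite ι]
    (hφ : ∀ p, Injective fun r ↦ φ (blockEntry H F r (ℓ.cellPerm D r p))) {i : ι} {k : K}
    (hk : k ≠ ℓ.root) :
    φ (blockEntry H F i (ℓ.link i k, Sum.inr 0)) = φ (blockEntry H F i (k, Sum.inr 0)) := by
  have hlink : Injective fun r ↦ φ (blockEntry H F r (ℓ.link r k, Sum.inr 0)) := by
    simpa [BlockLinks.cellPerm, blockEntry_inr] using hφ (k, Sum.inr 2)
  refine congrFun (eq_of_injective_of_forall_ne hlink
    (injective_blockEntry_of_linked hφ (k, Sum.inr 0)) (i := kind k) fun r hr ↦ ?_) i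
  rw [ℓ.link_apply hk hr.symm]

theorem apply_blockEntry_eq_root [Finite ι]
    (hφ : ∀ p, Injective fun r ↦ φ (blockEntry H F r (ℓ.cellPerm D r p))) {i : ι} {k : K}
    (hk : k = ℓ.root ∨ kind k = i) :
    φ (blockEntry H F i (k, Sum.inr 0)) = φ (blockEntry H F i (ℓ.root, Sum.inr 0)) := by
  classical
  refine apply_eq_of_isCycleOn (s := {k | k = ℓ.root ∨ kind k = i}) (f := ℓ.link i)
    (g := fun k ↦ φ (blockEntry H F i (k, Sum.inr 0))) ?_ (by simp)
    (fun k _ hk ↦ apply_blockEntry_link_eq hφ hk) (by simpa using hk)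
  simpa using ℓ.isCycleOn i

theorem apply_blockEntry_cellPerm_eq [Finite ι]
    (hφ : ∀ p, Injective fun r ↦ φ (blockEntry H F r (ℓ.cellPerm D r p)))
    (r : ι) (p : K × BlockCol D) :
    φ (blockEntry H F r (ℓ.cellPerm D r p)) = φ (blockEntry H F r (p.1, Sum.inr 0)) := by
  obtain ⟨k, c⟩ := p
  rw [BlockLinks.cellPerm, Equiv.prodCongrLeft_apply,
    apply_blockEntry_column_eq (injective_blockEntry_of_linked hφ)]
  split_ifs with hc
  · rcases eq_or_ne k ℓ.root with rfl | hk
    · exact apply_blockEntry_eq_root hφ ((ℓ.isCycleOn r).1.mapsTo (Or.inl rfl))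
    · exact apply_blockEntry_link_eq hφ hk
  · rfl

theorem apply_inr_eq_root [Finite ι]
    (hφ : ∀ p, Injective fun r ↦ φ (blockEntry H F r (ℓ.cellPerm D r p))) (x : X) :
    φ (Sum.inr x) = φ (blockEntry H F (F.label x) (ℓ.root, Sum.inr 0)) := by
  obtain ⟨⟨k, c⟩, rfl⟩ := F.exists_fill_inl x
  rw [F.label_inl, ← blockEntry_kind (H := H),
    apply_blockEntry_column_eq (injective_blockEntry_of_linked hφ),
    apply_blockEntry_eq_root hφ (Or.inr rfl)]

end Forcing

section Existence

/-- The rectangle `L` extends the array `M` to a lifting of the array `t`: every letter occurs `D`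
times, colourings that make the columns of `L` injective restrict on `M` to permutations of `t` and
on `L` to arrays with even column multiplicities, and one of them restricts on `M` to `t`. -/
structure IsLifting {ι R C A : Type*} [Fintype ι] [DecidableEq ι] [Fintype R] [Fintype C]
    [DecidableEq A] (t : R → ι) (D : ℕ) (L : ι → C → A) (M : R → A) : Prop where
  uniform : UniformFibers D (Sum.elim (fun p : ι × C ↦ L p.1 p.2) M)
  exists_perm : ∀ φ : A → ι, (∀ c, Injective fun r ↦ φ (L r c)) →
    ∃ π : Equiv.Perm ι, ∀ b, φ (M b) = π (t b)
  even_card : ∀ φ : A → ι, (∀ c, Injective fun r ↦ φ (L r c)) →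
    ∀ c, Even #{c' | ∀ r, φ (L r c') = φ (L r c)}
  exists_coloring : ∃ φ : A → ι, (∀ c, Injective fun r ↦ φ (L r c)) ∧ ∀ b, φ (M b) = t b

variable {ι R : Type*} [Fintype ι] [DecidableEq ι] [Fintype R] {t : R → ι} {D : ℕ}

theorem IsLifting.reindex {C C' A A' : Type*} [Fintype C] [Fintype C'] [DecidableEq A]
    [DecidableEq A'] {L : ι → C → A} {M : R → A} (h : IsLifting t D L M) (e : C' ≃ C)
    (g : A ≃ A') : IsLifting t D (fun r c ↦ g (L r (e c))) (fun b ↦ g (M b)) where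
  uniform := by
    convert (h.uniform.comp_equiv (((Equiv.refl ι).prodCongr e).sumCongr (Equiv.refl R))).equiv_comp
      g using 1
    funext x
    rcases x with ⟨r, c⟩ | b <;> rfl
  exists_perm φ hφ := h.exists_perm (φ ∘ g) fun c ↦ by simpa using hφ (e.symm c)
  even_card φ hφ c := by
    convert h.even_card (φ ∘ g) (fun c ↦ by simpa using hφ (e.symm c)) (e c) using 1
    exact card_equiv e (by simp)
  exists_coloring := by
    obtain ⟨φ, hφ, ht⟩ := h.exists_coloring
    exact ⟨φ ∘ g.symm, by simpa using fun c ↦ hφ (e c), by simpa using ht⟩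

theorem isLifting_blockEntry {K X : Type*} [Fintype K] [DecidableEq K] [DecidableEq X]
    {kind : K → ι} (hD : 2 ≤ D) (H : HalfFamily ι D) (F : BlockFilling kind t D X)
    (ℓ : BlockLinks kind) :
    IsLifting t D (fun r p ↦ blockEntry H F r (ℓ.cellPerm D r p))
      (fun b ↦ Sum.inr (F.fill (Sum.inr b))) where
  uniform := by
    convert (uniformFibers_blockEntry (H := H) (F := F) hD).comp_equiv
      ((Equiv.prodShear (Equiv.refl ι) (ℓ.cellPerm D)).sumCongr (Equiv.refl R)) using 1
    funext x
    rcases x with ⟨r, c⟩ | b <;> rfl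
  exists_perm φ hφ := by
    refine ⟨Equiv.ofBijective _ (Finite.injective_iff_bijective.1
      (injective_blockEntry_of_linked hφ (ℓ.root, Sum.inr 0))), fun b ↦ ?_⟩
    rw [apply_inr_eq_root hφ, F.label_inr]
    rfl
  even_card φ hφ c := by
    simp only [apply_blockEntry_cellPerm_eq hφ]
    have hcard (P : K → Prop) [DecidablePred P] :
        #{p : K × BlockCol D | P p.1} = #{k | P k} * Fintype.card (BlockCol D) := by
      rw [← card_univ, ← card_product]
      congr 1
      ext p
      simp
    have heven : Even (Fintype.card (BlockCol D)) := by simp [card_blockCol hD]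
    exact hcard (fun k ↦ ∀ r, φ (blockEntry H F r (k, Sum.inr 0)) =
      φ (blockEntry H F r (c.1, Sum.inr 0))) ▸ heven.mul_left _
  exists_coloring :=
    ⟨letterColor F, fun p ↦ by simp only [letterColor_blockEntry]; exact injective_id,
      F.label_inr⟩

theorem exists_isLifting (hD : 3 ≤ D) (hι : Fintype.card ι - 1 ≤ (2 * D - 3).choose (D - 2))
    {ρ N : ι → ℕ} (ht : ∀ i, #{b | t b = i} = D * ρ i) (hρ : ∀ i, ρ i ≤ 2 * (D - 2) * N i)
    (hN : ∃ i, N i ≠ 0) {w δ : ℕ} (hw : w = (∑ i, 2 * N i) * D)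
    (hδ : δ = Fintype.card ι * (∑ i, 2 * N i) + ∑ i, ρ i) :
    ∃ (L : ι → Fin w → Fin δ) (M : R → Fin δ), IsLifting t D L M := by
  obtain ⟨i, hi⟩ := hN
  have : Nonempty (Σ i, Fin (N i)) := ⟨i, 0, Nat.pos_of_ne_zero hi⟩
  obtain ⟨H⟩ := nonempty_halfFamily (D := D) (by omega) hι
  obtain ⟨F⟩ := nonempty_blockFilling (κ := fun i ↦ Fin (N i)) hD ht (by simpa using hρ)
  obtain ⟨ℓ⟩ := nonempty_blockLinks (Sigma.fst : (Σ i, Fin (N i)) → ι)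
  have hL := isLifting_blockEntry (by omega) H F ℓ
  have hC : Fintype.card (Fin w) = Fintype.card ((Σ i, Fin (N i)) × BlockCol D) := by
    simp only [Fintype.card_prod, card_blockCol (show 2 ≤ D by omega), Fintype.card_sigma,
      Fintype.card_fin, hw, ← mul_sum]
    ring
  have hR : Fintype.card R = (∑ i, ρ i) * D := by
    rw [← card_univ, card_eq_sum_card_fiberwise (f := t) (t := univ) (by simp),
      sum_congr rfl fun i _ ↦ ht i, ← mul_sum, mul_comm]
  have hA := hL.uniform.card_eq_card_mul
  rw [Fintype.card_sum, Fintype.card_prod, ← hC, hR, Fintype.card_fin, hw, ← mul_assoc, ← add_mul,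
    ← hδ] at hA
  have hA := Nat.eq_of_mul_eq_mul_right (by omega) hA
  exact ⟨_, _, hL.reindex (Fintype.equivOfCardEq hC)
    (Fintype.equivOfCardEq (by rw [← hA, Fintype.card_fin]))⟩

end Existence

section Tableaux

variable {m : ℕ} {A : Type*} {lam : Fin m → ℕ} {e : ℕ}

theorem tabCol_rectangle (L : Fin m → Fin e → A) (c : Fin e) :
    tabCol (fun _ ↦ e) L c = (List.finRange m).map fun r ↦ L r c := by
  rw [← List.filterMap_eq_map]
  exact List.filterMap_congr fun r _ ↦ dif_pos c.2

theorem tabRegular_rectangle_iff {L : Fin m → Fin e → A} :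
    TabRegular (fun _ ↦ e) L ↔ ∀ c, Injective fun r ↦ L r c := by
  have hcol (c : Fin e) :
      (tabCol (fun _ ↦ e) L c).Nodup ↔ Injective fun r ↦ L r c := by
    rw [tabCol_rectangle, ← List.ofFn_eq_map, List.nodup_ofFn]
  refine ⟨fun h c ↦ (hcol c).1 (h c), fun h c ↦ ?_⟩
  by_cases hc : c < e
  · exact (hcol ⟨c, hc⟩).2 (h ⟨c, hc⟩)
  · simp [tabCol, hc]

theorem tabDuplex_rectangle [DecidableEq A] {L : Fin m → Fin e → A}
    (h : ∀ c, Even #{c' | ∀ r, L r c' = L r c}) : TabDuplex (fun _ ↦ e) L := by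
  intro c hc
  obtain ⟨r⟩ : Nonempty (Fin m) := by
    by_contra hm
    simp_all [tabWidth]
  have hwidth : tabWidth (fun _ : Fin m ↦ e) = e := sup_const ⟨r, mem_univ r⟩ e
  rw [hwidth] at hc ⊢
  convert h ⟨c, hc⟩ using 1
  have hcol (c' : Fin e) : tabCol (fun _ ↦ e) L c' = tabCol (fun _ ↦ e) L c ↔
      ∀ r, L r c' = L r ⟨c, hc⟩ := by
    rw [tabCol_rectangle, tabCol_rectangle L ⟨c, hc⟩]
    simp
  rw [card_filter, sum_range, card_filter]
  simp only [hcol]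

theorem tabCol_eq_tabCol_tabLeft (T : (r : Fin m) → Fin (e + lam r) → A) (c : Fin e) :
    tabCol (fun r ↦ e + lam r) T c = tabCol (fun _ ↦ e) (tabLeft lam e T) c := by
  refine List.filterMap_congr fun r _ ↦ ?_
  rw [dif_pos c.2, dif_pos (Nat.lt_add_right _ c.2)]
  rfl

theorem tabCol_eq_tabCol_tabRight (T : (r : Fin m) → Fin (e + lam r) → A) (c : ℕ) :
    tabCol (fun r ↦ e + lam r) T (e + c) = tabCol lam (tabRight lam e T) c := by
  refine List.filterMap_congr fun r _ ↦ ?_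
  simp [tabRight]

theorem tabRegular_iff_tabLeft_tabRight {T : (r : Fin m) → Fin (e + lam r) → A} :
    TabRegular (fun r ↦ e + lam r) T ↔
      (∀ c, Injective fun r ↦ tabLeft lam e T r c) ∧ TabRegular lam (tabRight lam e T) := by
  rw [← tabRegular_rectangle_iff]
  refine ⟨fun h ↦ ⟨fun c ↦ ?_, fun c ↦ tabCol_eq_tabCol_tabRight T c ▸ h (e + c)⟩,
    fun ⟨hL, hR⟩ c ↦ ?_⟩
  · by_cases hc : c < e
    · exact tabCol_eq_tabCol_tabLeft T ⟨c, hc⟩ ▸ h c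
    · simp [tabCol, hc]
  · rcases lt_or_ge c e with hc | hc
    · exact tabCol_eq_tabCol_tabLeft T ⟨c, hc⟩ ▸ hL c
    · obtain ⟨c, rfl⟩ := Nat.exists_eq_add_of_le hc
      exact tabCol_eq_tabCol_tabRight T c ▸ hR c

theorem tabCount_eq_card [DecidableEq A] (T : (r : Fin m) → Fin (lam r) → A) (a : A) :
    tabCount lam T a = #{b : Σ r, Fin (lam r) | T b.1 b.2 = a} := by
  simp only [tabCount, card_filter, Fintype.sum_sigma]

theorem tabCount_append [DecidableEq A] (L : Fin m → Fin e → A)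
    (M : (Σ r, Fin (lam r)) → A) (a : A) :
    tabCount (fun r ↦ e + lam r) (fun r ↦ Fin.append (L r) fun c ↦ M ⟨r, c⟩) a =
      #{x | Sum.elim (fun p : Fin m × Fin e ↦ L p.1 p.2) M x = a} := by
  rw [tabCount, card_filter, Fintype.sum_sum_type, Fintype.sum_prod_type, Fintype.sum_sigma,
    ← sum_add_distrib]
  refine sum_congr rfl fun r _ ↦ ?_
  rw [card_filter, Fin.sum_univ_add]
  simp only [Fin.append_left, Fin.append_right]
  rfl

theorem IsLifting.exists_tableau [DecidableEq A] {D : ℕ} {S : (r : Fin m) → Fin (lam r) → Fin m}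
    (hS : TabRegular lam S) {L : Fin m → Fin e → A} {M : (Σ r, Fin (lam r)) → A}
    (h : IsLifting (fun b ↦ S b.1 b.2) D L M) :
    ∃ T : (r : Fin m) → Fin (e + lam r) → A,
      (∀ a, tabCount (fun r ↦ e + lam r) T a = D) ∧
      (∀ φ : A → Fin m, TabRegular (fun r ↦ e + lam r) (fun r c ↦ φ (T r c)) →
        ∃ π : Equiv.Perm (Fin m),
          tabRight lam e (fun r c ↦ φ (T r c)) = fun r c ↦ π (S r c)) ∧
      (∀ φ : A → Fin m, TabRegular (fun r ↦ e + lam r) (fun r c ↦ φ (T r c)) →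
        TabDuplex (fun _ ↦ e) (tabLeft lam e (fun r c ↦ φ (T r c)))) ∧
      (∃ φ : A → Fin m, TabRegular (fun r ↦ e + lam r) (fun r c ↦ φ (T r c)) ∧
        tabRight lam e (fun r c ↦ φ (T r c)) = S) := by
  let T (r : Fin m) : Fin (e + lam r) → A := Fin.append (L r) fun c ↦ M ⟨r, c⟩
  have hleft (φ : A → Fin m) : tabLeft lam e (fun r c ↦ φ (T r c)) = fun r c ↦ φ (L r c) :=
    funext₂ fun r c ↦ congrArg φ (Fin.append_left (L r) _ c)
  have hright (φ : A → Fin m) :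
      tabRight lam e (fun r c ↦ φ (T r c)) = fun r c ↦ φ (M ⟨r, c⟩) :=
    funext₂ fun r c ↦ congrArg φ (Fin.append_right (L r) _ c)
  refine ⟨T, fun a ↦ (tabCount_append L M a).trans (h.uniform a), fun φ hφ ↦ ?_, fun φ hφ ↦ ?_, ?_⟩
  all_goals simp only [tabRegular_iff_tabLeft_tabRight, hleft, hright] at *
  · obtain ⟨π, hπ⟩ := h.exists_perm φ hφ.1
    exact ⟨π, funext₂ fun r c ↦ hπ ⟨r, c⟩⟩
  · exact tabDuplex_rectangle fun c ↦ by convert h.even_card φ hφ.1 c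
  · obtain ⟨φ, hφ, hM⟩ := h.exists_coloring
    have hMS : (fun r c ↦ φ (M ⟨r, c⟩)) = S := funext₂ fun r c ↦ hM ⟨r, c⟩
    exact ⟨φ, ⟨hφ, hMS ▸ hS⟩, hMS⟩

end Tableaux

theorem choose_two_mul_sub_one_eq_two_mul {D : ℕ} (hD : 2 ≤ D) :
    (2 * (D - 1)).choose (D - 1) = 2 * (2 * D - 3).choose (D - 2) := by
  obtain ⟨n, rfl⟩ := Nat.exists_eq_add_of_le' hD
  have h := Nat.choose_symm_half n
  rw [show 2 * (n + 2 - 1) = 2 * n + 1 + 1 by omega, show n + 2 - 1 = n + 1 by omega,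
    show 2 * (n + 2) - 3 = 2 * n + 1 by omega, Nat.add_sub_cancel, Nat.choose_succ_succ']
  omega

theorem le_two_mul_sub_two_mul_ceil_div {D : ℕ} (hD : 3 ≤ D) (n : ℕ) :
    n ≤ 2 * (D - 2) * ⌈(n : ℚ) / (2 * ((D : ℚ) - 2))⌉₊ := by
  have hpos : (0 : ℚ) < 2 * ((D : ℚ) - 2) := by
    have : (3 : ℚ) ≤ D := by exact_mod_cast hD
    linarith
  have h := (div_le_iff₀ hpos).1 (Nat.le_ceil ((n : ℚ) / (2 * ((D : ℚ) - 2))))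
  rw [← Nat.cast_le (α := ℚ)]
  push_cast [Nat.cast_sub (show 2 ≤ D by omega)]
  linarith

end Lifting

theorem tableau_lifting_odd_general
    (D m d : ℕ) (hD : 3 ≤ D) (hd : 1 ≤ d)
    (hbinom : 2 * (m - 1) ≤ Nat.choose (2 * (D - 1)) (D - 1))
    (ρ : Fin m → ℕ) (hρsum : ∑ i, ρ i = d) (lam : Fin m → ℕ)
    (S : (r : Fin m) → Fin (lam r) → Fin m)
    (hSreg : TabRegular lam S)
    (hScont : ∀ i : Fin m, tabCount lam S i = D * ρ i)
    (eρ : ℕ) (heρ : eρ = ∑ i : Fin m, 2 * ⌈(ρ i : ℚ) / (2 * ((D : ℚ) - 2))⌉₊)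
    (δ : ℕ) (hδ : δ = m * eρ + d) :
    ∃ T : (r : Fin m) → Fin (eρ * D + lam r) → Fin δ,
      (∀ a : Fin δ, tabCount (fun r => eρ * D + lam r) T a = D) ∧
      (∀ φ : Fin δ → Fin m,
          TabRegular (fun r => eρ * D + lam r) (fun r c => φ (T r c)) →
          ∃ π : Equiv.Perm (Fin m),
            tabRight lam (eρ * D) (fun r c => φ (T r c)) = fun r c => π (S r c)) ∧
      (∀ φ : Fin δ → Fin m,
          TabRegular (fun r => eρ * D + lam r) (fun r c => φ (T r c)) →
          TabDuplex (fun _ : Fin m => eρ * D) (tabLeft lam (eρ * D) (fun r c => φ (T r c)))) ∧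
      (∃ φ : Fin δ → Fin m,
          TabRegular (fun r => eρ * D + lam r) (fun r c => φ (T r c)) ∧
          tabRight lam (eρ * D) (fun r c => φ (T r c)) = S) := by
  have hm : Fintype.card (Fin m) - 1 ≤ (2 * D - 3).choose (D - 2) := by
    rw [choose_two_mul_sub_one_eq_two_mul (by omega)] at hbinom
    simpa using hbinom
  have hρ (i : Fin m) := le_two_mul_sub_two_mul_ceil_div hD (ρ i)
  have hroot : ∃ i, ⌈(ρ i : ℚ) / (2 * ((D : ℚ) - 2))⌉₊ ≠ 0 := by
    obtain ⟨i, -, hi⟩ := Finset.exists_ne_zero_of_sum_ne_zero (show ∑ i, ρ i ≠ 0 by omega)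
    exact ⟨i, fun h ↦ hi (by simpa [h] using hρ i)⟩
  obtain ⟨L, M, h⟩ := exists_isLifting (t := fun b : Σ r, Fin (lam r) ↦ S b.1 b.2) hD hm
    (fun i ↦ (tabCount_eq_card S i).symm.trans (hScont i)) hρ hroot
    (congrArg (· * D) heρ) (δ := δ) (by rw [hδ, hρsum, ← heρ, Fintype.card_fin])
  exact h.exists_tableau hSreg

/-- **Tableau Lifting Theorem, odd case** (Theorem 13 of the paper, `D` odd). -/
theorem tableau_lifting_odd
    (D m d : ℕ) (hD : 3 ≤ D) (hDodd : Odd D) (hm : 2 ≤ m) (hd : 1 ≤ d)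
    (hbinom : 2 * (m - 1) ≤ Nat.choose (2 * (D - 1)) (D - 1))
    (ρ : Fin m → ℕ) (hρmono : ∀ i j : Fin m, i ≤ j → ρ j ≤ ρ i)
    (hρsum : ∑ i, ρ i = d)
    (lam : Fin m → ℕ) (hlammono : ∀ i j : Fin m, i ≤ j → lam j ≤ lam i)
    (hlamsum : ∑ r, lam r = d * D)
    (S : (r : Fin m) → Fin (lam r) → Fin m)
    (hSreg : TabRegular lam S)
    (hScont : ∀ i : Fin m, tabCount lam S i = D * ρ i)
    (eρ : ℕ) (heρ : eρ = ∑ i : Fin m, 2 * ⌈(ρ i : ℚ) / (2 * ((D : ℚ) - 2))⌉₊)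
    (δ : ℕ) (hδ : δ = m * eρ + d) :
    ∃ T : (r : Fin m) → Fin (eρ * D + lam r) → Fin δ,
      (∀ a : Fin δ, tabCount (fun r => eρ * D + lam r) T a = D) ∧
      (∀ φ : Fin δ → Fin m,
          TabRegular (fun r => eρ * D + lam r) (fun r c => φ (T r c)) →
          ∃ π : Equiv.Perm (Fin m),
            tabRight lam (eρ * D) (fun r c => φ (T r c)) = fun r c => π (S r c)) ∧
      (∀ φ : Fin δ → Fin m,
          TabRegular (fun r => eρ * D + lam r) (fun r c => φ (T r c)) →
          TabDuplex (fun _ : Fin m => eρ * D) (tabLeft lam (eρ * D) (fun r c => φ (T r c)))) ∧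
      (∃ φ : Fin δ → Fin m,
          TabRegular (fun r => eρ * D + lam r) (fun r c => φ (T r c)) ∧
          tabRight lam (eρ * D) (fun r c => φ (T r c)) = S) :=
  tableau_lifting_odd_general D m d hD hd hbinom ρ hρsum lam S hSreg hScont eρ heρ δ hδ
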